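/- arXiv:2101.10176 — 2 statements merged into one kernel-verified Lean document; each statement's English description precedes it below -/
import Mathlib

section
/- Let n ≥ 3 be an integer and R > 0. Suppose λ ∈ ℝ admits a nonzero function u, continuously differentiable on [0,R] and twice differentiable on (0,R), with u(0) = u(R) = 0 and −u''(t) + ((n−1)/4)·(n−1 + (n−3)/sinh²(t))·u(t) = λ·u(t) on (0,R). Then for v(t) = sin(πt/R) one has (∫₀ᴿ (v'(t)² + ((n−1)/4)·(n−1 + (n+1)/sinh²(t))·v(t)²) dt) / (∫₀ᴿ v(t)² dt) < λ + (n²−1)·π⁴/(12·R³). In particular, the difference between the first Dirichlet eigenvalue of −d²/dt² + V₂ on [0,R] and any Dirichlet eigenvalue of −d²/dt² + V₁ on [0,R] is less than (n²−1)·π⁴/(12·R³); this is the Schrödinger-equation form of the fundamental gap estimate λ₂(B_R) − λ₁(B_R) ≤ C(n)/R³ for geodesic balls B_R ⊂ ℍⁿ when n ≥ 3. -/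
/-- `lam` is a Dirichlet eigenvalue of the Schrödinger operator `-d²/dt² + V` on `[0, R]`. -/
def IsDirichletEigenvalue (V : ℝ → ℝ) (R lam : ℝ) : Prop :=
  ∃ u : ℝ → ℝ,
    (∃ t ∈ Set.Icc (0:ℝ) R, u t ≠ 0) ∧
    ContinuousOn u (Set.Icc 0 R) ∧
    (∀ t ∈ Set.Ioo (0:ℝ) R, DifferentiableAt ℝ u t) ∧
    ContinuousOn (deriv u) (Set.Icc 0 R) ∧
    (∀ t ∈ Set.Ioo (0:ℝ) R, DifferentiableAt ℝ (deriv u) t) ∧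
    u 0 = 0 ∧ u R = 0 ∧
    (∀ t ∈ Set.Ioo (0:ℝ) R, -(deriv (deriv u) t) + V t * u t = lam * u t)

/-- The Rayleigh quotient `R_V[u] = (∫₀ᴿ (u'² + V u²))/(∫₀ᴿ u²)` on `[0, R]`. -/
noncomputable def Rayleigh (V u : ℝ → ℝ) (R : ℝ) : ℝ :=
  (∫ t in (0:ℝ)..R, (deriv u t) ^ 2 + V t * (u t) ^ 2) / (∫ t in (0:ℝ)..R, (u t) ^ 2)

/-- The potential `V₁(t) = ((n−1)/4)·(n−1 + (n−3)/sinh² t)`. -/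
noncomputable def V1 (n : ℕ) (t : ℝ) : ℝ :=
  ((n : ℝ) - 1) / 4 * (((n : ℝ) - 1) + ((n : ℝ) - 3) / (Real.sinh t) ^ 2)

/-- The potential `V₂(t) = ((n−1)/4)·(n−1 + (n+1)/sinh² t)`. -/
noncomputable def V2 (n : ℕ) (t : ℝ) : ℝ :=
  ((n : ℝ) - 1) / 4 * (((n : ℝ) - 1) + ((n : ℝ) + 1) / (Real.sinh t) ^ 2)


open Real Set MeasureTheory in
lemma eig_lower (V : ℝ → ℝ) (c R lam : ℝ) (hR : 0 < R) (hV : ∀ t ∈ Set.Ioo (0:ℝ) R, c ≤ V t)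
    (h : IsDirichletEigenvalue V R lam) : c + (π / R) ^ 2 ≤ lam := by
  obtain ⟨u, ⟨t0, ht0, hne⟩, hc, hd, hc', hd', h0, h1, heq⟩ := h
  by_contra! hlt
  obtain ⟨C, hC⟩ := isCompact_Icc.exists_bound_of_continuousOn hc'
  have hC0 : 0 ≤ C := (norm_nonneg _).trans (hC 0 ⟨le_rfl, hR.le⟩)
  set p := π / R with hp
  have hp0 : 0 < p := by positivity
  have hpR : p * R = π := by rw [hp]; field_simp
  have hb1 : ∀ t ∈ Ioo 0 R, |u t| ≤ C * t := by
    intro t ht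
    obtain ⟨s, hs, hs'⟩ := exists_deriv_eq_slope u ht.1
      (hc.mono (Icc_subset_Icc le_rfl ht.2.le))
      (fun x hx => (hd x ⟨hx.1, hx.2.trans ht.2⟩).differentiableWithinAt)
    have h2 := hC s ⟨hs.1.le, (hs.2.trans ht.2).le⟩
    rw [hs', h0, sub_zero, sub_zero, norm_div, Real.norm_eq_abs, Real.norm_eq_abs,
      abs_of_pos ht.1, div_le_iff₀ ht.1] at h2
    exact h2
  have hb2 : ∀ t ∈ Ioo 0 R, |u t| ≤ C * (R - t) := by
    intro t ht
    obtain ⟨s, hs, hs'⟩ := exists_deriv_eq_slope u ht.2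
      (hc.mono (Icc_subset_Icc ht.1.le le_rfl))
      (fun x hx => (hd x ⟨ht.1.trans hx.1, hx.2⟩).differentiableWithinAt)
    have h2 := hC s ⟨(ht.1.trans hs.1).le, hs.2.le⟩
    have h3 : 0 < R - t := by linarith [ht.2]
    rw [hs', h1, zero_sub, norm_div, Real.norm_eq_abs, Real.norm_eq_abs, abs_neg,
      abs_of_pos h3, div_le_iff₀ h3] at h2
    exact h2
  have hsin : ∀ t ∈ Ioo 0 R, 0 < sin (p * t) := by
    intro t ht
    apply sin_pos_of_pos_of_lt_pi (mul_pos hp0 ht.1)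
    rw [← hpR]; exact mul_lt_mul_of_pos_left ht.2 hp0
  have hb3 : ∀ t ∈ Ioo 0 R, |u t| ≤ C * R / 2 * sin (p * t) := by
    intro t ht
    rcases le_total t (R / 2) with h | h
    · have h2 := mul_le_sin (x := p * t) (mul_pos hp0 ht.1).le (by rw [← hpR]; nlinarith)
      have h3 : 2 / π * (p * t) = 2 * t / R := by rw [hp]; field_simp
      rw [h3] at h2
      calc |u t| ≤ C * t := hb1 t ht
        _ = C * R / 2 * (2 * t / R) := by field_simp
        _ ≤ _ := by gcongr
    · have h2 := mul_le_sin (x := p * (R - t)) (mul_pos hp0 (by linarith [ht.2])).le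
        (by rw [← hpR]; nlinarith)
      have h3 : 2 / π * (p * (R - t)) = 2 * (R - t) / R := by rw [hp]; field_simp
      have h4 : sin (p * (R - t)) = sin (p * t) := by
        rw [mul_sub, hpR, sin_pi_sub]
      rw [h3, h4] at h2
      calc |u t| ≤ C * (R - t) := hb2 t ht
        _ = C * R / 2 * (2 * (R - t) / R) := by field_simp
        _ ≤ _ := by gcongr
  set G : ℝ → ℝ := fun t => u t * deriv u t - u t ^ 2 * (p * cos (p * t)) / sin (p * t) with hG
  set K := C + C * R / 2 * p with hK
  have hGb : ∀ t ∈ Ioo 0 R, |G t| ≤ K * |u t| := by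
    intro t ht
    have e1 : |u t * deriv u t| ≤ C * |u t| := by
      rw [abs_mul, mul_comm]
      exact mul_le_mul_of_nonneg_right (hC t ⟨ht.1.le, ht.2.le⟩) (abs_nonneg _)
    have e2 : |u t ^ 2 * (p * cos (p * t)) / sin (p * t)| ≤ C * R / 2 * p * |u t| := by
      rw [abs_div, abs_of_pos (hsin t ht), div_le_iff₀ (hsin t ht), abs_mul, abs_mul, abs_pow,
        abs_of_pos hp0]
      have := hb3 t ht
      have hcos := abs_cos_le_one (p * t)
      calc |u t| ^ 2 * (p * |cos (p * t)|) ≤ |u t| ^ 2 * (p * 1) := by gcongr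
        _ = |u t| * p * |u t| := by ring
        _ ≤ |u t| * p * (C * R / 2 * sin (p * t)) := by gcongr
        _ = _ := by ring
    calc |G t| ≤ _ := abs_sub _ _
      _ ≤ _ := by rw [hK]; linarith
  have hGd : ∀ t ∈ Ioo 0 R, HasDerivAt G
      ((deriv u t - u t * (p * cos (p * t)) / sin (p * t)) ^ 2 + (V t - lam + p ^ 2) * u t ^ 2) t := by
    intro t ht
    have a1 := (hd t ht).hasDerivAt
    have a2 := (hd' t ht).hasDerivAt
    have a3 : HasDerivAt (fun t => p * t) p t := by simpa using (hasDerivAt_id t).const_mul p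
    have hs := (hsin t ht).ne'
    have a4 := (a1.mul a2).sub (((a1.pow 2).mul (a3.cos.const_mul p)).div a3.sin hs)
    refine a4.congr_deriv ?_
    have e : deriv (deriv u) t = (V t - lam) * u t := by linarith [heq t ht]
    have hsc := sin_sq_add_cos_sq (p * t)
    have hc2 : cos (p * t) ^ 2 = 1 - sin (p * t) ^ 2 := by linarith
    simp only [e, Pi.pow_apply, Pi.mul_apply]
    field_simp
    ring_nf
    try simp only [hc2]
    try ring
  have hpos : ∀ t ∈ Ioo 0 R, 0 < V t - lam + p ^ 2 := by
    intro t ht; linarith [hV t ht]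
  have hmono : MonotoneOn G (Ioo 0 R) := by
    apply monotoneOn_of_deriv_nonneg (convex_Ioo 0 R)
    · exact fun t ht => (hGd t ht).continuousAt.continuousWithinAt
    · rw [interior_Ioo]; exact fun t ht => (hGd t ht).differentiableAt.differentiableWithinAt
    · rw [interior_Ioo]; intro t ht
      rw [(hGd t ht).deriv]
      have := hpos t ht
      positivity
  have lim0 : Filter.Tendsto (fun t => K * |u t|) (nhdsWithin 0 (Ioo 0 R)) (nhds 0) := by
    have := ((hc 0 ⟨le_rfl, hR.le⟩).mono Ioo_subset_Icc_self).abs.const_mul K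
    simpa [h0] using this.tendsto
  have limR : Filter.Tendsto (fun t => K * |u t|) (nhdsWithin R (Ioo 0 R)) (nhds 0) := by
    have := ((hc R ⟨hR.le, le_rfl⟩).mono Ioo_subset_Icc_self).abs.const_mul K
    simpa [h1] using this.tendsto
  have hG0 : ∀ t ∈ Ioo 0 R, G t = 0 := by
    intro t ht
    apply le_antisymm
    · have : (nhdsWithin R (Ioo 0 R)).NeBot := by
        rw [nhdsWithin_Ioo_eq_nhdsLT hR]; infer_instance
      apply ge_of_tendsto limR
      have m1 : Ioo t R ∈ nhdsWithin R (Ioo 0 R) := by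
        rw [nhdsWithin_Ioo_eq_nhdsLT hR]; exact Ioo_mem_nhdsLT ht.2
      filter_upwards [m1] with s hs
      have hs2 : s ∈ Ioo 0 R := ⟨ht.1.trans hs.1, hs.2⟩
      exact (hmono ht hs2 hs.1.le).trans ((le_abs_self _).trans (hGb s hs2))
    · have : (nhdsWithin 0 (Ioo 0 R)).NeBot := by
        rw [nhdsWithin_Ioo_eq_nhdsGT hR]; infer_instance
      rw [← neg_nonpos]
      apply ge_of_tendsto lim0
      have m1 : Ioo 0 t ∈ nhdsWithin 0 (Ioo 0 R) := by
        rw [nhdsWithin_Ioo_eq_nhdsGT hR]; exact Ioo_mem_nhdsGT ht.1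
      filter_upwards [m1] with s hs
      have hs2 : s ∈ Ioo 0 R := ⟨hs.1, hs.2.trans ht.2⟩
      exact (neg_le_neg (hmono hs2 ht hs.2.le)).trans ((neg_le_abs _).trans (hGb s hs2))
  have ht0' : t0 ∈ Ioo 0 R := by
    refine ⟨lt_of_le_of_ne ht0.1 ?_, lt_of_le_of_ne ht0.2 ?_⟩
    · rintro rfl; exact hne h0
    · rintro rfl; exact hne h1
  have z : HasDerivAt G 0 t0 :=
    (hasDerivAt_const t0 (0:ℝ)).congr_of_eventuallyEq
      (Filter.eventually_of_mem (isOpen_Ioo.mem_nhds ht0') hG0)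
  have e := (hGd t0 ht0').unique z
  have := hpos t0 ht0'
  have : 0 < u t0 ^ 2 := by positivity
  nlinarith [sq_nonneg (deriv u t0 - u t0 * (p * cos (p * t0)) / sin (p * t0)), mul_pos (hpos t0 ht0') this]

open Real Set MeasureTheory in
lemma int_sq_div_sinh (R : ℝ) (hR : 0 < R) :
    ∫ t in Ioc 0 R, t ^ 2 / sinh t ^ 2 ≤ π ^ 2 / 6 := by
  set F : ℕ → ℝ → ℝ := fun k t => 4 * (k:ℝ) * (t ^ (2:ℝ) * exp (-((2 * k) * t))) with hF
  have hint0 : ∀ k : ℕ, 0 < k → ∫ t in Ioi 0, F k t = 1 / (k:ℝ) ^ 2 := by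
    intro k hk
    have hk' : (0:ℝ) < 2 * k := by positivity
    have := integral_rpow_mul_exp_neg_mul_Ioi (a := 3) (r := 2 * k) (by norm_num) hk'
    norm_num at this
    simp only [hF]
    rw [integral_const_mul]
    norm_num
    rw [this]
    field_simp
    norm_num
  have hint : ∀ k : ℕ, IntegrableOn (F k) (Ioi 0) := by
    intro k
    rcases Nat.eq_zero_or_pos k with rfl | hk
    · simp [hF]
    · by_contra hh
      have h1 := hint0 k hk
      rw [integral_undef hh] at h1
      have : (0:ℝ) < 1 / (k:ℝ)^2 := by positivity
      linarith
  have hnn : ∀ k : ℕ, ∀ t ∈ Ioi (0:ℝ), 0 ≤ F k t := by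
    intro k t ht
    have : (0:ℝ) < t := ht
    simp only [hF]; positivity
  have hle : ∀ k : ℕ, ∫ t in Ioc 0 R, F k t ≤ 1 / (k:ℝ) ^ 2 := by
    intro k
    rcases Nat.eq_zero_or_pos k with rfl | hk
    · simp [hF]
    rw [← hint0 k hk]
    apply setIntegral_mono_set (hint k)
    · exact (ae_restrict_iff' measurableSet_Ioi).2 (Filter.Eventually.of_forall (hnn k))
    · exact Ioc_subset_Ioi_self.eventuallyLE
  have hnorm : ∀ k : ℕ, ∫ t in Ioc 0 R, ‖F k t‖ = ∫ t in Ioc 0 R, F k t := by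
    intro k
    apply setIntegral_congr_fun measurableSet_Ioc
    intro t ht
    exact Real.norm_of_nonneg (hnn k t ht.1)
  have hz := hasSum_zeta_two
  have hsum : Summable fun k : ℕ => ∫ t in Ioc 0 R, ‖F k t‖ := by
    refine Summable.of_nonneg_of_le (fun k => integral_nonneg fun _ => norm_nonneg _) ?_ hz.summable
    intro k; rw [hnorm]; exact hle k
  have hs := hasSum_integral_of_summable_integral_norm
    (fun k => (hint k).mono_set Ioc_subset_Ioi_self) hsum
  have hfin := hasSum_le hle hs hz
  refine le_trans (le_of_eq ?_) hfin
  apply setIntegral_congr_fun measurableSet_Ioc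
  intro t ht
  have ht0 : (0:ℝ) < t := ht.1
  have hx1 : ‖exp (-(2 * t))‖ < 1 := by
    rw [Real.norm_of_nonneg (exp_pos _).le]; exact Real.exp_lt_one_iff.2 (by linarith)
  have hg := (hasSum_coe_mul_geometric_of_norm_lt_one hx1).mul_left (4 * t ^ 2)
  have e : (fun k : ℕ => 4 * t ^ 2 * ((k:ℝ) * exp (-(2 * t)) ^ k)) = fun k => F k t := by
    funext k
    simp only [hF]
    rw [← exp_nat_mul, rpow_two]
    ring_nf
  rw [e] at hg
  simp only
  rw [hg.tsum_eq]
  have h2 : exp (-(2*t)) = exp (-t) ^ 2 := by rw [← exp_nat_mul]; ring_nf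
  have h3 : exp t = (exp (-t))⁻¹ := by rw [exp_neg, inv_inv]
  rw [sinh_eq, h2, h3]
  have h4 : 0 < exp (-t) := exp_pos _
  have h5 : exp (-t) < 1 := Real.exp_lt_one_iff.2 (by linarith)
  have h6 : 1 - exp (-t) ^ 2 ≠ 0 := by nlinarith
  field_simp
  norm_num

open Real Set MeasureTheory in
theorem gap_estimate_schrodinger_form (n : ℕ) (hn : 3 ≤ n) (R lam : ℝ) (hR : 0 < R)
    (h : IsDirichletEigenvalue (V1 n) R lam) :
    Rayleigh (V2 n) (fun t => Real.sin (Real.pi * t / R)) R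
      < lam + ((n : ℝ) ^ 2 - 1) * Real.pi ^ 4 / (12 * R ^ 3) := by
  have hn' : (3:ℝ) ≤ n := by exact_mod_cast hn
  have hlam := eig_lower (V1 n) (((n:ℝ) - 1) ^ 2 / 4) R lam hR (by
    intro t ht
    unfold V1
    have : 0 ≤ ((n:ℝ) - 1) / 4 * (((n : ℝ) - 3) / (Real.sinh t) ^ 2) :=
      mul_nonneg (by linarith) (div_nonneg (by linarith) (sq_nonneg _))
    linarith) h
  set p := π / R with hp
  have hp0 : 0 < p := by positivity
  have hpR : p * R = π := by rw [hp]; field_simp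
  have hfun : (fun t => Real.sin (Real.pi * t / R)) = fun t => sin (p * t) := by
    funext t; rw [hp]; ring_nf
  have hsub : ∀ t : ℝ, 0 < t → t ≤ sinh t := fun t ht => (self_lt_sinh_iff.2 ht).le
  have hI1 : IntervalIntegrable (fun t => t ^ 2 / sinh t ^ 2) volume 0 R := by
    rw [intervalIntegrable_iff_integrableOn_Ioc_of_le hR.le]
    refine Measure.integrableOn_of_bounded (M := 1) (by simp) (Measurable.aestronglyMeasurable (by fun_prop)) ?_
    refine (ae_restrict_iff' measurableSet_Ioc).2 (Filter.Eventually.of_forall ?_)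
    intro t ht
    rw [Real.norm_of_nonneg (by positivity)]
    have := hsub t ht.1
    have h0 := ht.1
    apply div_le_one_of_le₀ (by gcongr) (by positivity)
  have hI2 : IntervalIntegrable (fun t => sin (p * t) ^ 2 / sinh t ^ 2) volume 0 R := by
    refine (hI1.const_mul (p ^ 2)).mono_fun (Measurable.aestronglyMeasurable (by fun_prop)) ?_
    refine Filter.Eventually.of_forall ?_
    intro t
    simp only
    rw [Real.norm_of_nonneg (by positivity), Real.norm_of_nonneg (by positivity), ← mul_div_assoc,
      ← mul_pow]
    have h1 : sin (p * t) ^ 2 ≤ (p * t) ^ 2 := sq_le_sq.2 abs_sin_le_abs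
    gcongr
  have hIlt : ∫ t in (0:ℝ)..R, sin (p * t) ^ 2 / sinh t ^ 2 < p ^ 2 * (π ^ 2 / 6) := by
    have h1 : 0 < ∫ t in (0:ℝ)..R, (p ^ 2 * (t ^ 2 / sinh t ^ 2) - sin (p * t) ^ 2 / sinh t ^ 2) := by
      apply intervalIntegral.intervalIntegral_pos_of_pos_on ((hI1.const_mul (p ^ 2)).sub hI2) _ hR
      intro t ht
      have hs : 0 < sinh t := sinh_pos_iff.2 ht.1
      have hpt : 0 < p * t := mul_pos hp0 ht.1
      have hsl := sin_lt hpt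
      have hsp : 0 < sin (p * t) := by
        apply sin_pos_of_pos_of_lt_pi hpt
        rw [← hpR]; exact mul_lt_mul_of_pos_left ht.2 hp0
      rw [← mul_div_assoc, ← sub_div]
      apply div_pos _ (by positivity)
      nlinarith
    rw [intervalIntegral.integral_sub (hI1.const_mul (p ^ 2)) hI2,
      intervalIntegral.integral_const_mul] at h1
    have h2 := int_sq_div_sinh R hR
    rw [← intervalIntegral.integral_of_le hR.le] at h2
    have := mul_le_mul_of_nonneg_left h2 (sq_nonneg p)
    linarith
  have hS : ∫ t in (0:ℝ)..R, sin (p * t) ^ 2 = R / 2 := by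
    rw [intervalIntegral.integral_comp_mul_left (fun x => sin x ^ 2) hp0.ne', hpR, integral_sin_sq]
    simp [hp]; field_simp
  have hC : ∫ t in (0:ℝ)..R, cos (p * t) ^ 2 = R / 2 := by
    rw [intervalIntegral.integral_comp_mul_left (fun x => cos x ^ 2) hp0.ne', hpR, integral_cos_sq]
    simp [hp]; field_simp
  unfold Rayleigh
  rw [hfun]
  have hder : ∀ t, deriv (fun t => sin (p * t)) t = p * cos (p * t) := by
    intro t
    have a3 : HasDerivAt (fun t => p * t) p t := by simpa using (hasDerivAt_id t).const_mul p
    rw [a3.sin.deriv]; ring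
  have hnum : ∫ t in (0:ℝ)..R, (deriv (fun t => sin (p * t)) t) ^ 2 + V2 n t * (sin (p * t)) ^ 2
      = p ^ 2 * (R / 2) + ((n:ℝ) - 1) ^ 2 / 4 * (R / 2)
        + ((n:ℝ) ^ 2 - 1) / 4 * ∫ t in (0:ℝ)..R, sin (p * t) ^ 2 / sinh t ^ 2 := by
    nth_rewrite 1 [← hC]
    rw [← hS, ← intervalIntegral.integral_const_mul, ← intervalIntegral.integral_const_mul,
      ← intervalIntegral.integral_const_mul, ← intervalIntegral.integral_add,
      ← intervalIntegral.integral_add]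
    · congr 1
      funext t
      rw [hder, V2]
      ring
    · exact Continuous.intervalIntegrable (by fun_prop) _ _
    · exact hI2.const_mul _
    · exact Continuous.intervalIntegrable (by fun_prop) _ _
    · exact Continuous.intervalIntegrable (by fun_prop) _ _
  simp only
  rw [hnum, hS, div_lt_iff₀ (by positivity)]
  have hn2 : 0 < ((n:ℝ) ^ 2 - 1) / 4 := by nlinarith
  have k1 := mul_lt_mul_of_pos_left hIlt hn2
  have k2 : (lam + ((n : ℝ) ^ 2 - 1) * π ^ 4 / (12 * R ^ 3)) * (R / 2)
      = lam * (R / 2) + ((n:ℝ) ^ 2 - 1) / 4 * (p ^ 2 * (π ^ 2 / 6)) := by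
    rw [hp]; field_simp; ring
  rw [k2]
  have k3 := mul_le_mul_of_nonneg_right hlam (by positivity : 0 ≤ R / 2)
  linarith
end

section
/- Let n ≥ 2 be an integer, R > 0, and μ ∈ ℝ. Suppose w is a nonzero function, continuously differentiable on [0,R] and twice differentiable on (0,R), with w(0) = w(R) = 0 and −w''(t) + ((n−1)/4)·(n−1 + (n+1)/sinh²(t))·w(t) = μ·w(t) on (0,R), and suppose ∫₀ᴿ w(t)²/sinh²(t) dt < ∞. Then the Rayleigh quotient of w for the potential V₁ satisfies (∫₀ᴿ (w'(t)² + ((n−1)/4)·(n−1 + (n−3)/sinh²(t))·w(t)²) dt)/(∫₀ᴿ w(t)² dt) ≤ μ − (n−1)/sinh²(R). In particular, the first two Dirichlet eigenvalues of the geodesic ball B_R ⊂ ℍⁿ satisfy λ₂(B_R) − λ₁(B_R) ≥ (n−1)/sinh²(R). -/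
/-- If `w` is a nonzero Dirichlet eigenfunction of `-d²/dt² + V₂` on `[0, R]` with
eigenvalue `μ`, and `∫₀ᴿ w²/sinh² t dt < ∞`, then the Rayleigh quotient of `w` for `V₁` is
at most `μ − (n−1)/sinh² R`; in particular `λ₂(B_R) − λ₁(B_R) ≥ (n−1)/sinh² R` for geodesic
balls in `ℍⁿ`. -/
theorem fundamental_gap_ball_lower_bound (n : ℕ) (hn : 2 ≤ n) (R μ : ℝ) (hR : 0 < R)
    (w : ℝ → ℝ)
    (hne : ∃ t ∈ Set.Icc (0:ℝ) R, w t ≠ 0)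
    (hc : ContinuousOn w (Set.Icc 0 R))
    (hd : ∀ t ∈ Set.Ioo (0:ℝ) R, DifferentiableAt ℝ w t)
    (hc' : ContinuousOn (deriv w) (Set.Icc 0 R))
    (hd' : ∀ t ∈ Set.Ioo (0:ℝ) R, DifferentiableAt ℝ (deriv w) t)
    (h0 : w 0 = 0) (hRR : w R = 0)
    (hode : ∀ t ∈ Set.Ioo (0:ℝ) R, -(deriv (deriv w) t) + V2 n t * w t = μ * w t)
    (hint : IntervalIntegrable (fun t => (w t) ^ 2 / (Real.sinh t) ^ 2)
      MeasureTheory.volume 0 R) :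
    Rayleigh (V1 n) w R ≤ μ - ((n : ℝ) - 1) / (Real.sinh R) ^ 2 := by
  have hn1 : (0:ℝ) ≤ (n:ℝ) - 1 := by
    have : (2:ℝ) ≤ n := by exact_mod_cast hn
    linarith
  have hu : Set.uIcc (0:ℝ) R = Set.Icc 0 R := Set.uIcc_of_le hR.le
  have i1 : IntervalIntegrable (fun t => (w t) ^ 2) MeasureTheory.volume 0 R := by
    apply ContinuousOn.intervalIntegrable
    rw [hu]; exact hc.pow 2
  have i2 : IntervalIntegrable (fun t => (deriv w t) ^ 2) MeasureTheory.volume 0 R := by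
    apply ContinuousOn.intervalIntegrable
    rw [hu]; exact hc'.pow 2
  have e2 : (fun t => (deriv w t) ^ 2 + (V2 n t - μ) * (w t) ^ 2) = fun t =>
      (deriv w t) ^ 2 + ((((n:ℝ) - 1) / 4 * ((n:ℝ) - 1) - μ) * (w t) ^ 2
        + (((n:ℝ) - 1) / 4 * ((n:ℝ) + 1)) * ((w t) ^ 2 / (Real.sinh t) ^ 2)) := by
    funext t; unfold V2; ring
  have i3 : IntervalIntegrable (fun t => (deriv w t) ^ 2 + (V2 n t - μ) * (w t) ^ 2)
      MeasureTheory.volume 0 R := by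
    rw [e2]
    exact i2.add ((i1.const_mul _).add (hint.const_mul _))
  have hF : ∫ t in (0:ℝ)..R, ((deriv w t) ^ 2 + (V2 n t - μ) * (w t) ^ 2) = 0 := by
    rw [intervalIntegral.integral_eq_sub_of_hasDerivAt_of_le hR.le
      (f := fun t => w t * deriv w t) (hc.mul hc') _ i3]
    · simp [h0, hRR]
    · intro t ht
      have := (hd t ht).hasDerivAt.mul (hd' t ht).hasDerivAt
      refine this.congr_deriv ?_
      linear_combination w t * hode t ht * (-1)
  have hpos : 0 < ∫ t in (0:ℝ)..R, (w t) ^ 2 := by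
    apply intervalIntegral.integral_pos hR (hc.pow 2) (fun t _ => sq_nonneg _)
    obtain ⟨t, ht, h⟩ := hne
    exact ⟨t, ht, lt_of_le_of_ne (sq_nonneg _) (Ne.symm (pow_ne_zero 2 h))⟩
  have hmono : (∫ t in (0:ℝ)..R, (w t) ^ 2) / (Real.sinh R) ^ 2
      ≤ ∫ t in (0:ℝ)..R, (w t) ^ 2 / (Real.sinh t) ^ 2 := by
    rw [← intervalIntegral.integral_div]
    apply intervalIntegral.integral_mono_on_of_le_Ioo hR.le (i1.div_const _) hint
    intro t ht
    have h1 : 0 < Real.sinh t := Real.sinh_pos_iff.2 ht.1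
    have h2 : Real.sinh t ≤ Real.sinh R := Real.sinh_le_sinh.2 ht.2.le
    gcongr
  have e1 : (fun t => (deriv w t) ^ 2 + V1 n t * (w t) ^ 2) = fun t =>
      ((deriv w t) ^ 2 + (V2 n t - μ) * (w t) ^ 2) + (μ * (w t) ^ 2
        - ((n:ℝ) - 1) * ((w t) ^ 2 / (Real.sinh t) ^ 2)) := by
    funext t; unfold V1 V2; ring
  unfold Rayleigh
  rw [div_le_iff₀ hpos, e1, intervalIntegral.integral_add i3
    ((i1.const_mul _).sub (hint.const_mul _)), hF,
    intervalIntegral.integral_sub (i1.const_mul _) (hint.const_mul _),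
    intervalIntegral.integral_const_mul, intervalIntegral.integral_const_mul]
  have := mul_le_mul_of_nonneg_left hmono hn1
  have e : (μ - ((n:ℝ) - 1) / (Real.sinh R) ^ 2) * (∫ t in (0:ℝ)..R, (w t) ^ 2)
    = μ * (∫ t in (0:ℝ)..R, (w t) ^ 2)
      - ((n:ℝ) - 1) * ((∫ t in (0:ℝ)..R, (w t) ^ 2) / (Real.sinh R) ^ 2) := by ring
  rw [e]
  linarith
end
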